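/- For every s ∈ ℂ with Re s > 3, the series ∑_{m≥1} r_4(m)²/m^s converges absolutely and (1/64) ∑_{m≥1} r_4(m)²/m^s = (2^{6−3s} − 5·2^{3−2s} + 2^{1−s} + 1) ζ(s−2) ζ(s−1)² ζ(s) / ((1 + 2^{1−s}) ζ(2s−2)). -/

import Mathlib

open scoped Real

/-- `rk k m` = number of ways to write `m` as a sum of `k` integer squares. -/
noncomputable def rk (k m : ℕ) : ℕ :=
  Nat.card {v : Fin k → ℤ // (∑ i, (v i) ^ 2) = (m : ℤ)}

/-- `Sk k t` = number of lattice points of `ℤ^k` in the closed ball of radius `√t`. -/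
noncomputable def Sk (k : ℕ) (t : ℝ) : ℕ :=
  Nat.card {v : Fin k → ℤ // (∑ i, ((v i : ℝ)) ^ 2) ≤ t}

/-- `Vk k` = volume of the unit ball in `ℝ^k`. -/
noncomputable def Vk (k : ℕ) : ℝ :=
  Real.pi ^ ((k : ℝ) / 2) / Real.Gamma ((k : ℝ) / 2 + 1)

/-- `Pk k t` = lattice point discrepancy of the `k`-dimensional ball of radius `√t`. -/
noncomputable def Pk (k : ℕ) (t : ℝ) : ℝ :=
  (Sk k t : ℝ) - Vk k * t ^ ((k : ℝ) / 2)

/-- Value of the (analytically continued) Riemann zeta function at a real point. -/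
noncomputable def rzeta (x : ℝ) : ℝ := (riemannZeta (x : ℂ)).re

/-- The Riemann zeta function with its 2-factor removed. -/
noncomputable def rzeta2 (x : ℝ) : ℝ := (1 - (2 : ℝ) ^ (-x)) * rzeta x

/-- The constant `C_k` for `k ≥ 4`. -/
noncomputable def Ck (k : ℕ) : ℝ :=
  ((k : ℝ) ^ 2 / 24) * (Vk k) ^ 2 +
    Real.pi ^ (k : ℝ) * rzeta ((k : ℝ) - 2) * (1 + (2 : ℝ) ^ ((3 : ℝ) - (k : ℝ))) /
      (12 * (Real.Gamma ((k : ℝ) / 2)) ^ 2 * rzeta2 (k : ℝ))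

open Complex

/-- The sign `-1` when both arguments are even and `1` otherwise. -/
def evenSign (d e : ℤ) : ℤ := if Even d ∧ Even e then -1 else 1

/-- The solutions of `i² + d e = n` with `d, e > 0`, as triples `(i, d, e)`. -/
noncomputable def liouvilleSet (n : ℤ) : Finset (ℤ × ℤ × ℤ) :=
  (Finset.Icc (-n) n ×ˢ Finset.Icc 1 n ×ˢ Finset.Icc 1 n).filter
    fun x => x.1 ^ 2 + x.2.1 * x.2.2 = n

theorem mem_liouvilleSet {n : ℤ} {x : ℤ × ℤ × ℤ} :
    x ∈ liouvilleSet n ↔ 0 < x.2.1 ∧ 0 < x.2.2 ∧ x.1 ^ 2 + x.2.1 * x.2.2 = n := by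
  obtain ⟨i, d, e⟩ := x
  simp only [liouvilleSet, Finset.mem_filter, Finset.mem_product, Finset.mem_Icc]
  constructor
  · rintro ⟨⟨-, ⟨h1, -⟩, h2, -⟩, h⟩
    exact ⟨by omega, by omega, h⟩
  · rintro ⟨h1, h2, h⟩
    have hde : 0 < d * e := mul_pos h1 h2
    refine ⟨⟨⟨?_, ?_⟩, ⟨by omega, ?_⟩, by omega, ?_⟩, h⟩
    · nlinarith [sq_nonneg (i + 1), sq_nonneg i]
    · nlinarith [sq_nonneg (i - 1), sq_nonneg i]
    · nlinarith [sq_nonneg i]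
    · nlinarith [sq_nonneg i]

/-- The weight whose sum over `liouvilleSet n` localizes on `e = 2 i + d`. -/
def liouvilleWeight (x : ℤ × ℤ × ℤ) : ℤ :=
  evenSign x.2.1 x.2.2 * ((x.2.1 + x.2.2) * (x.2.1 + 2 * x.1) * (x.2.2 - 2 * x.1))

theorem sum_liouvilleWeight_pos (n : ℤ) :
    ∑ x ∈ (liouvilleSet n).filter (fun x => 2 * x.1 + x.2.1 < x.2.2), liouvilleWeight x = 0 := by
  refine Finset.sum_involution
    (fun x _ => (-(x.1 + x.2.1), x.2.1, x.2.2 - 2 * x.1 - x.2.1)) ?_ ?_ ?_ ?_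
  · rintro ⟨i, d, e⟩ -
    have : evenSign d (e - 2 * i - d) = evenSign d e := by
      simp only [evenSign]
      congr 1
      simp only [eq_iff_iff, and_congr_right_iff]
      intro hd
      simp [Int.even_sub, hd]
    simp only [liouvilleWeight, this]
    ring
  · rintro ⟨i, d, e⟩ - h h'
    apply h
    simp only [Prod.mk.injEq] at h'
    have : d + 2 * i = 0 := by omega
    simp [liouvilleWeight, this]
  · rintro ⟨i, d, e⟩ h
    simp only [Finset.mem_filter, mem_liouvilleSet] at h ⊢
    obtain ⟨⟨h1, h2, h3⟩, h4⟩ := h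
    exact ⟨⟨h1, by omega, by rw [← h3]; ring⟩, by omega⟩
  · rintro ⟨i, d, e⟩ -
    simp only [Prod.mk.injEq]
    exact ⟨by ring, trivial, by ring⟩

theorem sum_liouvilleWeight_neg (n : ℤ) :
    ∑ x ∈ (liouvilleSet n).filter (fun x => x.2.2 < 2 * x.1 + x.2.1), liouvilleWeight x = 0 := by
  rw [← sum_liouvilleWeight_pos n]
  refine Finset.sum_nbij' (fun x => (-x.1, x.2.2, x.2.1)) (fun x => (-x.1, x.2.2, x.2.1)) ?_ ?_ ?_ ?_ ?_
  · rintro ⟨i, d, e⟩ h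
    simp only [Finset.mem_filter, mem_liouvilleSet] at h ⊢
    exact ⟨⟨h.1.2.1, h.1.1, by rw [← h.1.2.2]; ring⟩, by omega⟩
  · rintro ⟨i, d, e⟩ h
    simp only [Finset.mem_filter, mem_liouvilleSet] at h ⊢
    exact ⟨⟨h.1.2.1, h.1.1, by rw [← h.1.2.2]; ring⟩, by omega⟩
  · rintro ⟨i, d, e⟩ -; simp
  · rintro ⟨i, d, e⟩ -; simp
  · rintro ⟨i, d, e⟩ -
    simp only [liouvilleWeight, evenSign, and_comm]
    ring

theorem sum_liouvilleWeight (n : ℤ) :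
    ∑ x ∈ liouvilleSet n, liouvilleWeight x =
      ∑ x ∈ (liouvilleSet n).filter (fun x => x.2.2 = 2 * x.1 + x.2.1), liouvilleWeight x := by
  rw [← Finset.sum_filter_add_sum_filter_not (liouvilleSet n) (fun x => x.2.2 = 2 * x.1 + x.2.1),
    ← Finset.sum_filter_add_sum_filter_not ((liouvilleSet n).filter (fun x => ¬ x.2.2 = 2 * x.1 + x.2.1))
      (fun x => x.2.2 < 2 * x.1 + x.2.1), Finset.filter_filter, Finset.filter_filter]
  have h1 : (liouvilleSet n).filter (fun x => ¬ x.2.2 = 2 * x.1 + x.2.1 ∧ x.2.2 < 2 * x.1 + x.2.1)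
      = (liouvilleSet n).filter (fun x => x.2.2 < 2 * x.1 + x.2.1) :=
    Finset.filter_congr fun x _ => by omega
  have h2 : (liouvilleSet n).filter
      (fun x => ¬ x.2.2 = 2 * x.1 + x.2.1 ∧ ¬ x.2.2 < 2 * x.1 + x.2.1)
      = (liouvilleSet n).filter (fun x => 2 * x.1 + x.2.1 < x.2.2) :=
    Finset.filter_congr fun x _ => by omega
  rw [h1, h2, sum_liouvilleWeight_neg, sum_liouvilleWeight_pos]
  simp

theorem sum_alternating_mul_sub (k : ℕ) (c : ℤ) :
    ∑ d ∈ Finset.range (2 * k), (-1 : ℤ) ^ (d + 1) * (d * (c - d)) = k * (c + 1 - 2 * k) := by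
  induction k with
  | zero => simp
  | succ k ih =>
    rw [show 2 * (k + 1) = 2 * k + 1 + 1 by ring, Finset.sum_range_succ, Finset.sum_range_succ, ih]
    simp only [pow_succ, pow_mul]
    push_cast
    ring_nf

theorem sum_liouvilleWeight_diagonal_sq (k : ℕ) :
    ∑ x ∈ (liouvilleSet ((k : ℤ) ^ 2)).filter (fun x => x.2.2 = 2 * x.1 + x.2.1),
      liouvilleWeight x = 2 * (k : ℤ) ^ 2 := by
  have key := sum_alternating_mul_sub k (2 * k)
  have hr : ∑ x ∈ (liouvilleSet ((k : ℤ) ^ 2)).filter (fun x => x.2.2 = 2 * x.1 + x.2.1),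
      liouvilleWeight x = ∑ d ∈ (Finset.range (2 * k)).filter (fun d => 0 < d),
        2 * (k : ℤ) * ((-1 : ℤ) ^ (d + 1) * (d * (2 * k - d))) := by
    have hk {i d e : ℤ} (h : (i, d, e) ∈ (liouvilleSet ((k : ℤ) ^ 2)).filter
        (fun x => x.2.2 = 2 * x.1 + x.2.1)) : 0 < d ∧ 0 < e ∧ e = 2 * i + d ∧ i + d = k := by
      simp only [Finset.mem_filter, mem_liouvilleSet] at h
      obtain ⟨⟨h1, h2, h3⟩, h4⟩ := h
      refine ⟨h1, h2, h4, ?_⟩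
      have : (i + d) ^ 2 = (k : ℤ) ^ 2 := by rw [← h3, h4]; ring
      exact (sq_eq_sq₀ (by omega) (by omega)).1 this
    refine Finset.sum_nbij' (fun x => x.2.1.toNat) (fun d => ((k : ℤ) - d, d, 2 * k - d))
      ?_ ?_ ?_ ?_ ?_
    · rintro ⟨i, d, e⟩ h
      obtain ⟨h1, h2, h3, h4⟩ := hk h
      simp only [Finset.mem_filter, Finset.mem_range]
      omega
    · intro d h
      simp only [Finset.mem_filter, Finset.mem_range] at h
      simp only [Finset.mem_filter, mem_liouvilleSet]
      exact ⟨⟨by omega, by omega, by ring⟩, by ring⟩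
    · rintro ⟨i, d, e⟩ h
      obtain ⟨h1, h2, h3, h4⟩ := hk h
      simp only [Prod.mk.injEq]
      omega
    · simp
    · rintro ⟨i, d, e⟩ h
      obtain ⟨h1, h2, h3, h4⟩ := hk h
      obtain ⟨d, rfl⟩ := Int.eq_ofNat_of_zero_le h1.le
      obtain rfl : i = k - d := by omega
      obtain rfl : e = 2 * k - d := by omega
      have : evenSign d (2 * k - d) = (-1) ^ (d + 1) := by
        rcases Nat.even_or_odd d with hd | hd
        · simp [evenSign, Int.even_sub, hd, pow_succ]
        · simp [evenSign, Int.even_sub, hd, pow_succ]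
      simp only [liouvilleWeight, Int.toNat_natCast, this]
      ring
  rw [hr, ← Finset.mul_sum, Finset.sum_filter_of_ne, key]
  · ring
  · intro d _ h
    by_contra h0
    obtain rfl : d = 0 := by omega
    simp at h

theorem sum_liouvilleWeight_diagonal_of_not_isSquare {n : ℤ} (hn : ¬ IsSquare n) :
    ∑ x ∈ (liouvilleSet n).filter (fun x => x.2.2 = 2 * x.1 + x.2.1), liouvilleWeight x = 0 := by
  apply Finset.sum_eq_zero
  rintro ⟨i, d, e⟩ h
  simp only [Finset.mem_filter, mem_liouvilleSet] at h
  exact absurd ⟨i + d, by rw [← h.1.2.2, h.2]; ring⟩ hn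

theorem sum_liouvilleWeight_eq (n : ℤ) :
    ∑ x ∈ liouvilleSet n, liouvilleWeight x =
      2 * ∑ x ∈ liouvilleSet n, evenSign x.2.1 x.2.2 * (x.2.1 * (n - 5 * x.1 ^ 2)) := by
  have hflip (f : ℤ × ℤ × ℤ → ℤ) :
      ∑ x ∈ liouvilleSet n, f x = ∑ x ∈ liouvilleSet n, f (-x.1, x.2.2, x.2.1) := by
    refine Finset.sum_nbij' (fun x => (-x.1, x.2.2, x.2.1)) (fun x => (-x.1, x.2.2, x.2.1))
      ?_ ?_ ?_ ?_ ?_ <;> rintro ⟨i, d, e⟩ h <;> simp only [mem_liouvilleSet] at h ⊢ <;>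
      first | (refine ⟨h.2.1, h.1, ?_⟩; rw [← h.2.2]; ring) | simp
  have hneg (f : ℤ × ℤ × ℤ → ℤ) :
      ∑ x ∈ liouvilleSet n, f x = ∑ x ∈ liouvilleSet n, f (-x.1, x.2.1, x.2.2) := by
    refine Finset.sum_nbij' (fun x => (-x.1, x.2.1, x.2.2)) (fun x => (-x.1, x.2.1, x.2.2))
      ?_ ?_ ?_ ?_ ?_ <;> rintro ⟨i, d, e⟩ h <;> simp only [mem_liouvilleSet] at h ⊢ <;>
      first | (refine ⟨h.1, h.2.1, ?_⟩; rw [← h.2.2]; ring) | simp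
  have h1 := hneg liouvilleWeight
  have h2 := hflip (fun x => evenSign x.2.1 x.2.2 * (x.2.1 * (n - 5 * x.1 ^ 2)))
  have h3 : ∑ x ∈ liouvilleSet n, liouvilleWeight x +
      ∑ x ∈ liouvilleSet n, liouvilleWeight (-x.1, x.2.1, x.2.2) =
      2 * (∑ x ∈ liouvilleSet n, evenSign x.2.1 x.2.2 * (x.2.1 * (n - 5 * x.1 ^ 2)) +
       ∑ x ∈ liouvilleSet n, evenSign x.2.2 x.2.1 * (x.2.2 * (n - 5 * (-x.1) ^ 2))) := by
    rw [← Finset.sum_add_distrib, ← Finset.sum_add_distrib, Finset.mul_sum]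
    refine Finset.sum_congr rfl ?_
    rintro ⟨i, d, e⟩ h
    simp only [mem_liouvilleSet] at h
    have : evenSign e d = evenSign d e := by simp only [evenSign, and_comm]
    simp only [liouvilleWeight, this, ← h.2.2]
    ring
  simp only at h2
  linarith

/-- The divisor sum `∑_{d e = m} ± d`, with a minus sign when both `d` and `e` are even. -/
def signedSigma (m : ℕ) : ℤ := ∑ x ∈ m.divisorsAntidiagonal, evenSign x.1 x.2 * x.1

theorem sum_liouvilleSet_eq (n : ℕ) (g : ℤ → ℤ) :
    ∑ x ∈ liouvilleSet n, evenSign x.2.1 x.2.2 * (x.2.1 * g x.1) =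
      ∑ i ∈ Finset.Icc (-n : ℤ) n, g i * signedSigma (n - i ^ 2).toNat := by
  rw [← Finset.sum_fiberwise_of_maps_to (s := liouvilleSet n) (t := Finset.Icc (-n : ℤ) n)
    (g := fun x => x.1)]
  · refine Finset.sum_congr rfl fun i _ => ?_
    rw [signedSigma, Finset.mul_sum]
    refine Finset.sum_nbij' (fun x => (x.2.1.toNat, x.2.2.toNat)) (fun x => (i, x.1, x.2))
      ?_ ?_ ?_ ?_ ?_
    · rintro ⟨j, d, e⟩ h
      simp only [Finset.mem_filter, mem_liouvilleSet] at h
      obtain ⟨⟨h1, h2, h3⟩, rfl⟩ := h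
      have hde : 0 < d * e := mul_pos h1 h2
      simp only [Nat.mem_divisorsAntidiagonal]
      rw [← Int.toNat_mul h1.le h2.le, ← h3]
      constructor
      · congr 1; ring
      · have : j ^ 2 + d * e - j ^ 2 = d * e := by ring
        omega
    · rintro ⟨d, e⟩ h
      simp only [Nat.mem_divisorsAntidiagonal] at h
      simp only [Finset.mem_filter, mem_liouvilleSet, and_true]
      have h1 : d * e ≠ 0 := h.1 ▸ h.2
      have : (d * e : ℤ) = n - i ^ 2 := by
        have := h.1
        zify at this
        rw [this]; omega
      refine ⟨?_, ?_, by rw [this]; ring⟩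
      · have := (mul_ne_zero_iff.1 h1).1; omega
      · have := (mul_ne_zero_iff.1 h1).2; omega
    · rintro ⟨j, d, e⟩ h
      simp only [Finset.mem_filter, mem_liouvilleSet] at h
      simp only [Prod.mk.injEq]
      omega
    · simp
    · rintro ⟨j, d, e⟩ h
      simp only [Finset.mem_filter, mem_liouvilleSet] at h
      obtain ⟨⟨h1, h2, h3⟩, rfl⟩ := h
      simp only [Int.toNat_of_nonneg h1.le, Int.toNat_of_nonneg h2.le]
      ring
  · intro x h
    simp only [liouvilleSet, Finset.mem_filter, Finset.mem_product] at h
    exact h.1.1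

theorem signedSigma_recurrence (n : ℕ) :
    ∑ i ∈ Finset.Icc (-n : ℤ) n, (n - 5 * i ^ 2) * signedSigma (n - i ^ 2).toNat =
      if IsSquare n then (n : ℤ) else 0 := by
  rw [← sum_liouvilleSet_eq n (fun i => n - 5 * i ^ 2)]
  have h := sum_liouvilleWeight_eq n
  rw [sum_liouvilleWeight] at h
  split_ifs with hn
  · obtain ⟨k, rfl⟩ := hn
    have h' := sum_liouvilleWeight_diagonal_sq k
    rw [show ((k * k : ℕ) : ℤ) = (k : ℤ) ^ 2 by push_cast; ring] at h ⊢
    linarith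
  · have h' := sum_liouvilleWeight_diagonal_of_not_isSquare (n := n)
      (by rwa [Int.isSquare_natCast_iff])
    linarith

theorem signedSigma_zero : signedSigma 0 = 0 := by simp [signedSigma]

/-- The integer vectors of length `k` with sum of squares `m`. -/
noncomputable def sumSqSet (k : ℕ) (m : ℤ) : Finset (Fin k → ℤ) :=
  (Fintype.piFinset fun _ => Finset.Icc (-m) m).filter fun v => ∑ i, v i ^ 2 = m

theorem mem_sumSqSet {k : ℕ} {m : ℤ} {v : Fin k → ℤ} :
    v ∈ sumSqSet k m ↔ ∑ i, v i ^ 2 = m := by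
  simp only [sumSqSet, Finset.mem_filter, Fintype.mem_piFinset, Finset.mem_Icc,
    and_iff_right_iff_imp]
  intro h i
  have : v i ^ 2 ≤ m := by
    rw [← h]
    exact Finset.single_le_sum (f := fun i => v i ^ 2) (fun i _ => sq_nonneg _) (Finset.mem_univ i)
  exact ⟨by nlinarith [sq_nonneg (v i + 1), sq_nonneg (v i)],
    by nlinarith [sq_nonneg (v i - 1), sq_nonneg (v i)]⟩

theorem rk_eq_card_sumSqSet (k m : ℕ) : rk k m = (sumSqSet k m).card := by
  rw [rk, ← Nat.card_eq_finsetCard]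
  exact Nat.card_congr (Equiv.subtypeEquivRight fun v => mem_sumSqSet.symm)

theorem sumSqSet_of_neg (k : ℕ) {m : ℤ} (hm : m < 0) : sumSqSet k m = ∅ := by
  refine Finset.eq_empty_of_forall_notMem fun v hv => ?_
  rw [mem_sumSqSet] at hv
  have : 0 ≤ ∑ i, v i ^ 2 := Finset.sum_nonneg fun i _ => sq_nonneg _
  omega

theorem card_sumSqSet_zero (k : ℕ) : (sumSqSet k 0).card = 1 := by
  rw [Finset.card_eq_one]
  refine ⟨0, ?_⟩
  ext v
  rw [mem_sumSqSet, Finset.sum_eq_zero_iff_of_nonneg (fun i _ => sq_nonneg _)]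
  simp [funext_iff]

theorem sum_sumSqSet_succ (k n : ℕ) (g : ℤ → ℤ) :
    ∑ v ∈ sumSqSet (k + 1) n, g (v 0) =
      ∑ i ∈ Finset.Icc (-n : ℤ) n, g i * (sumSqSet k (n - i ^ 2)).card := by
  rw [← Finset.sum_fiberwise_of_maps_to (t := Finset.Icc (-n : ℤ) n) (g := fun v => v 0)]
  · refine Finset.sum_congr rfl fun i _ => ?_
    rw [Finset.sum_congr rfl (g := fun _ => g i), Finset.sum_const, nsmul_eq_mul, mul_comm]
    · congr 2
      refine Finset.card_nbij' Fin.tail (fun w => Fin.cons i w) ?_ ?_ ?_ ?_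
      · intro v hv
        simp only [Finset.coe_filter, Set.mem_ofPred_eq, mem_sumSqSet, Fin.sum_univ_succ] at hv
        simp only [Finset.mem_coe, mem_sumSqSet, Fin.tail]
        rw [← hv.1, hv.2]; ring
      · intro v hv
        simp only [Finset.mem_coe, mem_sumSqSet] at hv
        simp [mem_sumSqSet, Fin.sum_univ_succ, hv]
      · intro v hv
        simp only [Finset.coe_filter, Set.mem_ofPred_eq] at hv
        rw [← hv.2]
        exact Fin.cons_self_tail v
      · intro v _
        simp
    · intro v hv
      rw [(Finset.mem_filter.1 hv).2]
  · intro v hv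
    exact Fintype.mem_piFinset.1 (Finset.mem_filter.1 hv).1 0

theorem card_sumSqSet_recurrence (k n : ℕ) :
    ∑ i ∈ Finset.Icc (-n : ℤ) n, (n - (k + 1) * i ^ 2) * ((sumSqSet k (n - i ^ 2)).card : ℤ) = 0 := by
  rw [← sum_sumSqSet_succ k n (fun i => n - (k + 1) * i ^ 2)]
  have hswap (j : Fin (k + 1)) :
      ∑ v ∈ sumSqSet (k + 1) n, v 0 ^ 2 = ∑ v ∈ sumSqSet (k + 1) n, v j ^ 2 := by
    refine Finset.sum_nbij' (fun v => v ∘ Equiv.swap 0 j) (fun v => v ∘ Equiv.swap 0 j)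
      ?_ ?_ ?_ ?_ ?_
    · intro v hv
      rw [mem_sumSqSet] at hv ⊢
      rw [← hv]
      exact Equiv.sum_comp (Equiv.swap 0 j) fun i => v i ^ 2
    · intro v hv
      rw [mem_sumSqSet] at hv ⊢
      rw [← hv]
      exact Equiv.sum_comp (Equiv.swap 0 j) fun i => v i ^ 2
    · intro v _; ext; simp
    · intro v _; ext; simp
    · intro v _; simp
  have h1 : ∑ v ∈ sumSqSet (k + 1) n, (k + 1) * v 0 ^ 2 = ∑ v ∈ sumSqSet (k + 1) n, (n : ℤ) := by
    rw [← Finset.mul_sum]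
    calc ((k + 1 : ℤ)) * ∑ v ∈ sumSqSet (k + 1) n, v 0 ^ 2
        = ∑ j : Fin (k + 1), ∑ v ∈ sumSqSet (k + 1) n, v j ^ 2 := by
          simp [← hswap]
      _ = _ := by
          rw [Finset.sum_comm]
          exact Finset.sum_congr rfl fun v hv => mem_sumSqSet.1 hv
  rw [Finset.sum_sub_distrib, h1, sub_self]

theorem sum_sq_eq_indicator (n : ℕ) (hn : 0 < n) :
    ∑ i ∈ Finset.Icc (-n : ℤ) n, (n - 5 * i ^ 2) * (if (n : ℤ) - i ^ 2 = 0 then (1 : ℤ) else 0) =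
      if IsSquare n then -8 * (n : ℤ) else 0 := by
  simp only [mul_ite, mul_one, mul_zero, ← Finset.sum_filter]
  split_ifs with h
  · obtain ⟨k, rfl⟩ := h
    have hk : 0 < k := Nat.pos_of_mul_pos_left hn
    have : (Finset.Icc (-(k * k : ℕ) : ℤ) (k * k : ℕ)).filter
        (fun i : ℤ => ((k * k : ℕ) : ℤ) - i ^ 2 = 0) = {(k : ℤ), -(k : ℤ)} := by
      ext i
      simp only [Finset.mem_filter, Finset.mem_Icc, Finset.mem_insert, Finset.mem_singleton]
      push_cast
      rw [← sq_eq_sq_iff_eq_or_eq_neg]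
      constructor
      · rintro ⟨-, h⟩; linarith
      · intro h
        refine ⟨?_, by linarith⟩
        rcases sq_eq_sq_iff_eq_or_eq_neg.1 h with rfl | rfl <;> constructor <;> nlinarith
    rw [this, Finset.sum_pair (by omega)]
    push_cast
    ring
  · apply Finset.sum_eq_zero
    intro i hi
    have hi := (Finset.mem_filter.1 hi).2
    refine absurd ?_ h
    rw [← Int.isSquare_natCast_iff]
    exact ⟨i, by linarith⟩

theorem card_sumSqSet_four (n : ℕ) :
    ((sumSqSet 4 n).card : ℤ) = 8 * signedSigma n + if n = 0 then 1 else 0 := by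
  induction n using Nat.strong_induction_on with
  | _ n ih =>
  rcases Nat.eq_zero_or_pos n with rfl | hn
  · simp [signedSigma_zero, card_sumSqSet_zero]
  let D : ℤ → ℤ := fun m =>
    (sumSqSet 4 m).card - 8 * signedSigma m.toNat - if m = 0 then 1 else 0
  have hsum : ∑ i ∈ Finset.Icc (-n : ℤ) n, (n - 5 * i ^ 2) * D (n - i ^ 2) = 0 := by
    have h1 := card_sumSqSet_recurrence 4 n
    have h2 := signedSigma_recurrence n
    have h3 := sum_sq_eq_indicator n hn
    have : ∀ i : ℤ, (n - 5 * i ^ 2) * D (n - i ^ 2) =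
        (n - ((4 : ℕ) + 1) * i ^ 2) * ((sumSqSet 4 (n - i ^ 2)).card : ℤ)
        - 8 * ((n - 5 * i ^ 2) * signedSigma (n - i ^ 2).toNat)
        - (n - 5 * i ^ 2) * (if (n : ℤ) - i ^ 2 = 0 then (1 : ℤ) else 0) := by
      intro i
      simp only [D]
      push_cast
      ring
    simp only [this, Finset.sum_sub_distrib, ← Finset.mul_sum, h1, h2, h3]
    split_ifs <;> ring
  have hD : ∀ i ∈ Finset.Icc (-n : ℤ) n, i ≠ 0 → (n - 5 * i ^ 2) * D (n - i ^ 2) = 0 := by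
    intro i _ hi
    have hi2 : 0 < i ^ 2 := by positivity
    have : D (n - i ^ 2) = 0 := by
      rcases lt_or_ge ((n : ℤ) - i ^ 2) 0 with h | h
      · simp [D, sumSqSet_of_neg 4 h, Int.toNat_of_nonpos h.le, signedSigma_zero, h.ne]
      · obtain ⟨m, hm⟩ := Int.eq_ofNat_of_zero_le h
        have := ih m (by omega)
        simp only [D, hm, this]
        simp
    rw [this, mul_zero]
  rw [Finset.sum_eq_single 0 hD (by simp)] at hsum
  have : D n = 0 := by
    simpa [hn.ne'] using hsum
  simp only [D, Int.toNat_natCast] at this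
  have hn' : (n : ℤ) ≠ 0 := by exact_mod_cast hn.ne'
  simp only [hn', hn.ne', if_false] at this ⊢
  linarith

/-- The function equal to `d` if `4 ∤ d` and to `0` otherwise. -/
def idNotFourDvd : ArithmeticFunction ℕ := ⟨fun d => if 4 ∣ d then 0 else d, by simp⟩

theorem idNotFourDvd_apply (d : ℕ) : idNotFourDvd d = if 4 ∣ d then 0 else d := rfl

/-- The function `n ↦ ∑_{d ∣ n, 4 ∤ d} d`. -/
noncomputable def jacobiSigma : ArithmeticFunction ℕ :=
  idNotFourDvd * ArithmeticFunction.zeta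

theorem jacobiSigma_apply (n : ℕ) :
    jacobiSigma n = ∑ d ∈ n.divisors, if 4 ∣ d then 0 else d := by
  rw [jacobiSigma, ArithmeticFunction.mul_zeta_apply]
  rfl

theorem isMultiplicative_jacobiSigma : jacobiSigma.IsMultiplicative := by
  refine ArithmeticFunction.IsMultiplicative.mul ⟨by simp [idNotFourDvd_apply], fun {m n} h => ?_⟩
    ArithmeticFunction.isMultiplicative_zeta
  have : 4 ∣ m * n ↔ 4 ∣ m ∨ 4 ∣ n := by
    refine ⟨fun h4 => ?_, fun h4 => h4.elim (·.mul_right _) (·.mul_left _)⟩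
    rcases Nat.even_or_odd m with hm | hm
    · have hn : Odd n := by
        rw [← Nat.not_even_iff_odd]
        intro hn
        have := Nat.dvd_gcd hm.two_dvd hn.two_dvd
        rw [h] at this
        omega
      exact Or.inl (Nat.Coprime.dvd_of_dvd_mul_right
        (Nat.Coprime.pow_left 2 (Nat.coprime_two_left.2 hn)) h4)
    · exact Or.inr (Nat.Coprime.dvd_of_dvd_mul_left
        (Nat.Coprime.pow_left 2 (Nat.coprime_two_left.2 hm)) h4)
  simp only [idNotFourDvd_apply, this]
  by_cases h1 : 4 ∣ m <;> by_cases h2 : 4 ∣ n <;> simp [h1, h2]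

theorem jacobiSigma_odd_prime_pow {p : ℕ} (hp : p.Prime) (h2 : p ≠ 2) (e : ℕ) :
    jacobiSigma (p ^ e) = ∑ j ∈ Finset.range (e + 1), p ^ j := by
  rw [jacobiSigma_apply, Nat.sum_divisors_prime_pow hp]
  refine Finset.sum_congr rfl fun j _ => if_neg fun h => ?_
  have h3 : 2 ∣ p := Nat.prime_two.dvd_of_dvd_pow ((show 2 ∣ 4 by norm_num).trans h)
  exact h2 ((Nat.prime_dvd_prime_iff_eq Nat.prime_two hp).1 h3).symm

theorem jacobiSigma_two_pow_succ (e : ℕ) : jacobiSigma (2 ^ (e + 1)) = 3 := by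
  rw [jacobiSigma_apply, Nat.sum_divisors_prime_pow Nat.prime_two]
  induction e with
  | zero => decide
  | succ e ih =>
    rw [Finset.sum_range_succ, ih, if_pos ⟨2 ^ e, by ring⟩]

theorem signedSigma_eq_jacobiSigma (n : ℕ) : signedSigma n = jacobiSigma n := by
  have h1 : signedSigma n = ∑ x ∈ n.divisorsAntidiagonal, (x.1 : ℤ) -
      2 * ∑ x ∈ n.divisorsAntidiagonal with Even x.1 ∧ Even x.2, (x.1 : ℤ) := by
    rw [signedSigma, Finset.mul_sum, Finset.sum_filter, ← Finset.sum_sub_distrib]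
    refine Finset.sum_congr rfl fun x _ => ?_
    simp only [evenSign, Int.even_coe_nat]
    split_ifs <;> ring
  have h2 : ∑ x ∈ n.divisorsAntidiagonal with Even x.1 ∧ Even x.2, 2 * (x.1 : ℤ) =
      ∑ x ∈ n.divisorsAntidiagonal with 4 ∣ x.1, (x.1 : ℤ) := by
    refine Finset.sum_nbij' (fun x => (2 * x.1, x.2 / 2)) (fun x => (x.1 / 2, 2 * x.2))
      ?_ ?_ ?_ ?_ ?_
    · rintro ⟨a, b⟩ h
      simp only [Finset.mem_filter, Nat.mem_divisorsAntidiagonal] at h ⊢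
      obtain ⟨⟨h, h0⟩, ⟨a, rfl⟩, b, rfl⟩ := h
      refine ⟨⟨?_, h0⟩, ⟨a, by ring⟩⟩
      rw [← h, show (b + b) / 2 = b by omega]
      ring
    · rintro ⟨a, b⟩ h
      simp only [Finset.mem_filter, Nat.mem_divisorsAntidiagonal] at h ⊢
      obtain ⟨⟨h, h0⟩, a, rfl⟩ := h
      have h' : 4 * a / 2 = 2 * a := by omega
      rw [h']
      refine ⟨⟨?_, h0⟩, ⟨a, by ring⟩, ⟨b, by ring⟩⟩
      rw [← h]
      ring
    · rintro ⟨a, b⟩ h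
      simp only [Finset.mem_filter] at h
      obtain ⟨-, -, b, rfl⟩ := h
      simp only [Prod.mk.injEq]
      omega
    · rintro ⟨a, b⟩ h
      simp only [Finset.mem_filter] at h
      simp only [Prod.mk.injEq]
      omega
    · simp
  rw [h1, Finset.mul_sum, h2, jacobiSigma_apply, Finset.sum_filter, ← Finset.sum_sub_distrib,
    Nat.sum_divisorsAntidiagonal
      (fun d _ => (d : ℤ) - if 4 ∣ d then (d : ℤ) else 0)]
  push_cast
  refine Finset.sum_congr rfl fun d _ => ?_
  split_ifs <;> simp

/-- **Jacobi's four-square theorem.** -/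
theorem rk_four_eq {n : ℕ} (hn : n ≠ 0) : rk 4 n = 8 * jacobiSigma n := by
  have h := card_sumSqSet_four n
  rw [← rk_eq_card_sumSqSet, signedSigma_eq_jacobiSigma, if_neg hn, add_zero] at h
  exact_mod_cast h

theorem jacobiSigma_le_mul_harmonic (n : ℕ) : (jacobiSigma n : ℝ) ≤ n * harmonic n := by
  have h1 : (jacobiSigma n : ℝ) ≤ ∑ d ∈ n.divisors, (d : ℝ) := by
    rw [jacobiSigma_apply]
    push_cast
    gcongr with d
    split_ifs <;> simp
  have h2 : ∑ d ∈ n.divisors, (d : ℝ) = ∑ d ∈ n.divisors, (n : ℝ) * (d : ℝ)⁻¹ := by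
    rw [← Nat.sum_div_divisors n (fun d => (d : ℝ))]
    refine Finset.sum_congr rfl fun d hd => ?_
    rw [Nat.cast_div (Nat.dvd_of_mem_divisors hd), div_eq_mul_inv]
    exact_mod_cast (Nat.pos_of_mem_divisors hd).ne'
  rw [h2, ← Finset.mul_sum] at h1
  refine h1.trans ?_
  rw [harmonic_eq_sum_Icc]
  push_cast
  gcongr
  intro d hd
  exact Finset.mem_Icc.2 ⟨Nat.pos_of_mem_divisors hd, Nat.divisor_le hd⟩

theorem jacobiSigma_le_rpow (n : ℕ) {ε : ℝ} (hε : 0 < ε) :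
    (jacobiSigma n : ℝ) ≤ (1 + 1 / ε) * (n : ℝ) ^ (1 + ε) := by
  rcases Nat.eq_zero_or_pos n with rfl | hn
  · simp only [ArithmeticFunction.map_zero, Nat.cast_zero]
    positivity
  have hn' : (1 : ℝ) ≤ n := by exact_mod_cast hn
  have h1 : Real.log n ≤ (n : ℝ) ^ ε / ε := Real.log_le_rpow_div (by positivity) hε
  have h2 : 1 ≤ (n : ℝ) ^ ε := Real.one_le_rpow hn' hε.le
  calc (jacobiSigma n : ℝ) ≤ n * harmonic n := jacobiSigma_le_mul_harmonic n
    _ ≤ n * ((1 + 1 / ε) * (n : ℝ) ^ ε) := by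
      gcongr
      refine (harmonic_le_one_add_log n).trans ?_
      rw [add_mul, one_mul, one_div_mul_eq_div]
      gcongr
    _ = _ := by
      rw [Real.rpow_add (by positivity), Real.rpow_one]
      ring

theorem summable_norm_jacobiSigma_sq_div_cpow {s : ℂ} (hs : 3 < s.re) :
    Summable fun n : ℕ => ‖(jacobiSigma n : ℂ) ^ 2 / (n : ℂ) ^ s‖ := by
  set ε := (s.re - 3) / 4 with hε
  have hε0 : 0 < ε := by rw [hε]; linarith
  refine Summable.of_nonneg_of_le (fun _ => norm_nonneg _) (fun n => ?_)
    ((Real.summable_nat_rpow (p := 2 * (1 + ε) - s.re)).2 (by linarith) |>.mul_left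
      ((1 + 1 / ε) ^ 2))
  rcases Nat.eq_zero_or_pos n with rfl | hn
  · simp only [ArithmeticFunction.map_zero, Nat.cast_zero]
    rw [zero_pow two_ne_zero, zero_div, norm_zero]
    positivity
  have hn' : (0 : ℝ) < n := by exact_mod_cast hn
  rw [norm_div, norm_pow, Complex.norm_natCast, Complex.norm_natCast_cpow_of_pos hn,
    div_le_iff₀ (by positivity), mul_assoc, ← Real.rpow_add hn', sub_add_cancel, mul_comm 2,
    Real.rpow_mul hn'.le, Real.rpow_two, ← mul_pow]
  gcongr
  exact jacobiSigma_le_rpow n hε0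

theorem hasSum_sum_range_pow_sq {p x : ℂ} (hp : p ≠ 1) (hx : ‖x‖ < 1) (hpx : ‖p * x‖ < 1)
    (hppx : ‖p ^ 2 * x‖ < 1) :
    HasSum (fun e : ℕ => (∑ j ∈ Finset.range (e + 1), p ^ j) ^ 2 * x ^ e)
      ((1 - p ^ 2 * x ^ 2) / ((1 - x) * (1 - p * x) ^ 2 * (1 - p ^ 2 * x))) := by
  have hne {z : ℂ} (hz : ‖z‖ < 1) : 1 - z ≠ 0 := by
    intro h
    rw [← sub_eq_zero.1 h, norm_one] at hz
    exact lt_irrefl _ hz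
  have h1 := hne hx
  have h2 := hne hpx
  have h3 := hne hppx
  have hp' : p - 1 ≠ 0 := sub_ne_zero.2 hp
  have key := (((hasSum_geometric_of_norm_lt_one hppx).mul_left (p ^ 2)).sub
    ((hasSum_geometric_of_norm_lt_one hpx).mul_left (2 * p))).add
    (hasSum_geometric_of_norm_lt_one hx) |>.mul_left (((p - 1) ^ 2)⁻¹)
  convert! key using 1
  · ext e
    rw [geom_sum_eq hp]
    field_simp
    ring
  · field_simp
    ring

theorem hasSum_jacobiSigma_two_pow {x : ℂ} (hx : ‖x‖ < 1) :
    HasSum (fun e : ℕ => (jacobiSigma (2 ^ e) : ℂ) ^ 2 * x ^ e) ((1 + 8 * x) / (1 - x)) := by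
  have h1 : 1 - x ≠ 0 := by
    intro h
    rw [← sub_eq_zero.1 h, norm_one] at hx
    exact lt_irrefl _ hx
  rw [← hasSum_nat_add_iff' 1]
  convert! (hasSum_geometric_of_norm_lt_one hx).mul_left (9 * x) using 1
  · ext e
    rw [jacobiSigma_two_pow_succ]
    push_cast
    ring
  · simp [isMultiplicative_jacobiSigma.1]
    field_simp
    ring

theorem prime_natCast_cpow_sub (p : Nat.Primes) (s : ℂ) (k : ℕ) :
    (p : ℂ) ^ (-(s - k)) = (p : ℂ) ^ k * (p : ℂ) ^ (-s) := by
  rw [neg_sub, sub_eq_add_neg, cpow_add _ _ (by exact_mod_cast p.2.ne_zero), cpow_natCast]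

/-- The correction at `2` in the Euler product of `∑ (r_4(m) / 8)² / m ^ s`, where `x = 2 ^ (-s)`. -/
noncomputable def twoFactor (x : ℂ) : ℂ := (64 * x ^ 3 - 40 * x ^ 2 + 2 * x + 1) / (1 + 2 * x)

theorem tsum_jacobiSigma_prime_pow {s : ℂ} (hs : 3 < s.re) (p : Nat.Primes) :
    (∑' e : ℕ, (jacobiSigma ((p : ℕ) ^ e) : ℂ) ^ 2 / (((p : ℕ) ^ e : ℕ) : ℂ) ^ s) *
        (1 - (p : ℂ) ^ (-(2 * s - 2)))⁻¹ =
      (if (p : ℕ) = 2 then twoFactor (2 ^ (-s)) else 1) *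
        ((1 - (p : ℂ) ^ (-(s - 2)))⁻¹ * (1 - (p : ℂ) ^ (-(s - 1)))⁻¹ ^ 2 *
          (1 - (p : ℂ) ^ (-s))⁻¹) := by
  have hlt (k : ℕ) (hk : k < 3) : ‖(p : ℂ) ^ k * (p : ℂ) ^ (-s)‖ < 1 := by
    rw [← prime_natCast_cpow_sub]
    refine (norm_prime_cpow_le_one_half p ?_).trans_lt (by norm_num)
    have : (k : ℝ) ≤ 2 := by exact_mod_cast Nat.le_of_lt_succ hk
    simp only [sub_re, natCast_re]
    linarith
  have h2s : (p : ℂ) ^ (-(2 * s - 2)) = ((p : ℂ) ^ 1 * (p : ℂ) ^ (-s)) ^ 2 := by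
    rw [← prime_natCast_cpow_sub, ← cpow_nat_mul]
    congr 1
    push_cast
    ring
  have h2 := prime_natCast_cpow_sub p s 2
  have h1 := prime_natCast_cpow_sub p s 1
  push_cast at h1 h2
  rw [h2s, h1, h2]
  have hterm (e : ℕ) : (jacobiSigma ((p : ℕ) ^ e) : ℂ) ^ 2 / (((p : ℕ) ^ e : ℕ) : ℂ) ^ s =
      (jacobiSigma ((p : ℕ) ^ e) : ℂ) ^ 2 * ((p : ℂ) ^ (-s)) ^ e := by
    rw [div_eq_mul_inv, ← cpow_neg]
    congr 1
    rw [Nat.cast_pow, ← natCast_cpow_natCast_mul, mul_comm, ← cpow_nat_mul, mul_comm]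
  simp only [hterm]
  have l0 := hlt 0 (by norm_num)
  have l1 := hlt 1 (by norm_num)
  have l2 := hlt 2 (by norm_num)
  rw [pow_zero, one_mul] at l0
  rw [pow_one] at l1 ⊢
  have hne {z : ℂ} (hz : ‖z‖ < 1) : 1 - z ≠ 0 := by
    intro h
    rw [← sub_eq_zero.1 h, norm_one] at hz
    exact lt_irrefl _ hz
  have n0 := hne l0
  have n1 := hne l1
  have n2 := hne l2
  have n3 : 1 + (p : ℂ) * (p : ℂ) ^ (-s) ≠ 0 := by
    have := hne (z := -((p : ℂ) * (p : ℂ) ^ (-s))) (by rwa [norm_neg])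
    rwa [sub_neg_eq_add] at this
  have n4 : 1 - ((p : ℂ) * (p : ℂ) ^ (-s)) ^ 2 =
      (1 - (p : ℂ) * (p : ℂ) ^ (-s)) * (1 + (p : ℂ) * (p : ℂ) ^ (-s)) := by ring
  rw [n4]
  split_ifs with hp
  · obtain rfl : p = ⟨2, Nat.prime_two⟩ := Subtype.ext hp
    simp only [Nat.cast_ofNat] at *
    rw [(hasSum_jacobiSigma_two_pow l0).tsum_eq, twoFactor]
    generalize (2 : ℂ) ^ (-s) = x at *
    rw [show 64 * x ^ 3 - 40 * x ^ 2 + 2 * x + 1 =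
      (1 + 8 * x) * (1 - 2 * x) * (1 - 2 ^ 2 * x) by ring]
    generalize 1 - 2 * x = a at *
    generalize 1 - 2 ^ 2 * x = b at *
    generalize 1 + 2 * x = c at *
    field_simp
  · have := (hasSum_sum_range_pow_sq (by exact_mod_cast p.2.one_lt.ne') l0 l1 l2).tsum_eq
    simp only [jacobiSigma_odd_prime_pow p.2 hp]
    push_cast
    rw [this, ← mul_pow, n4]
    generalize (p : ℂ) ^ (-s) = x at *
    field_simp

theorem tsum_jacobiSigma_sq_div_cpow {s : ℂ} (hs : 3 < s.re) :
    (∑' n : ℕ, (jacobiSigma n : ℂ) ^ 2 / (n : ℂ) ^ s) * riemannZeta (2 * s - 2) =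
      twoFactor (2 ^ (-s)) * (riemannZeta (s - 2) * riemannZeta (s - 1) ^ 2 * riemannZeta s) := by
  have hE := EulerProduct.eulerProduct_hasProd
    (f := fun n : ℕ => (jacobiSigma n : ℂ) ^ 2 / (n : ℂ) ^ s)
    (by simp [isMultiplicative_jacobiSigma.1])
    (fun {m n} h => by
      rw [isMultiplicative_jacobiSigma.2 h]
      push_cast
      rw [natCast_mul_natCast_cpow]
      ring)
    (summable_norm_jacobiSigma_sq_div_cpow hs) (by simp)
  have z0 := riemannZeta_eulerProduct_hasProd (s := s) (by linarith)
  have z1 := riemannZeta_eulerProduct_hasProd (s := s - 1) (by simp; linarith)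
  have z2 := riemannZeta_eulerProduct_hasProd (s := s - 2) (by simp; linarith)
  have z3 := riemannZeta_eulerProduct_hasProd (s := 2 * s - 2) (by simp; linarith)
  have hc : HasProd (fun p : Nat.Primes => if (p : ℕ) = 2 then twoFactor (2 ^ (-s)) else 1)
      (twoFactor (2 ^ (-s))) := by
    simpa using hasProd_single
      (f := fun p : Nat.Primes => if (p : ℕ) = 2 then twoFactor (2 ^ (-s)) else 1)
      ⟨2, Nat.prime_two⟩ (fun p hp => if_neg fun h => hp (Subtype.ext h))
  have h := hc.mul ((z2.mul (z1.mul z1)).mul z0)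
  simp only [← sq] at h
  refine (hE.mul z3).unique ?_
  simpa only [tsum_jacobiSigma_prime_pow hs] using h

/-- explicit Euler-product evaluation of `∑ r_4(m)²/m^s`. -/
theorem r4_squared_dirichlet_series (s : ℂ) (hs : 3 < s.re) :
    Summable (fun m : ℕ => ‖((rk 4 (m + 1) : ℂ)) ^ 2 / ((m : ℂ) + 1) ^ s‖) ∧
    (1 / 64 : ℂ) * (∑' m : ℕ, ((rk 4 (m + 1) : ℂ)) ^ 2 / ((m : ℂ) + 1) ^ s)
      = ((2 : ℂ) ^ (6 - 3 * s) - 5 * (2 : ℂ) ^ (3 - 2 * s) + (2 : ℂ) ^ (1 - s) + 1)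
          * riemannZeta (s - 2) * riemannZeta (s - 1) ^ 2 * riemannZeta s
        / ((1 + (2 : ℂ) ^ (1 - s)) * riemannZeta (2 * s - 2)) := by
  have hterm (m : ℕ) : ((rk 4 (m + 1) : ℂ)) ^ 2 / ((m : ℂ) + 1) ^ s =
      64 * ((jacobiSigma (m + 1) : ℂ) ^ 2 / ((m + 1 : ℕ) : ℂ) ^ s) := by
    rw [rk_four_eq m.succ_ne_zero]
    push_cast
    ring
  have hsum := summable_norm_jacobiSigma_sq_div_cpow hs
  simp only [hterm]
  refine ⟨?_, ?_⟩
  · simp only [norm_mul]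
    exact ((summable_nat_add_iff 1).2 hsum).mul_left _
  · have hz : riemannZeta (2 * s - 2) ≠ 0 :=
      riemannZeta_ne_zero_of_one_le_re (by simp; linarith)
    have h := tsum_jacobiSigma_sq_div_cpow hs
    rw [hsum.of_norm.tsum_eq_zero_add] at h
    simp only [ArithmeticFunction.map_zero, Nat.cast_zero, ne_eq, OfNat.ofNat_ne_zero,
      not_false_eq_true, zero_pow, zero_div, zero_add] at h
    have hpow (k j : ℕ) : (2 : ℂ) ^ (k - j * s) = 2 ^ k * (2 ^ (-s)) ^ j := by
      rw [sub_eq_add_neg, cpow_add _ _ two_ne_zero, cpow_natCast, ← cpow_nat_mul, mul_neg]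
    have e1 := hpow 6 3
    have e2 := hpow 3 2
    have e3 := hpow 1 1
    push_cast at e1 e2 e3
    rw [one_mul] at e3
    rw [tsum_mul_left, eq_div_of_mul_eq hz h, e1, e2, e3, twoFactor]
    simp only [pow_one]
    field_simp
    ring
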